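/- Main theorem (dimension d): let 𝒰 be an update family on ℤ^d that is not supercritical unrooted. Then there exists a constant κ > 0 such that for every n ∈ ℕ, every configuration η ∈ V(n, {−⌊κ n 2^n⌋,...,⌊κ n 2^n⌋}^d) satisfies η_0 = 1. That is, starting from all ones in the box of side 2⌊κ n 2^n⌋+1 and never using more than n zeroes simultaneously, the origin can never be set to zero. -/

import Mathlib

open Classical in
/-- A configuration on `Λ` extended by zeroes (`false`) outside `Λ`. -/
noncomputable def extCfg {d : ℕ} (Λ : Set (Fin d → ℤ)) (η : (Fin d → ℤ) → Bool) (s : Fin d → ℤ) : Bool :=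
  if s ∈ Λ then η s else false

/-- An update family: every rule is a finite nonempty subset of `ℤ^d \ {0}`. -/
def isUpdateFamily {d : ℕ} (U : Finset (Finset (Fin d → ℤ))) : Prop :=
  ∀ X ∈ U, X.Nonempty ∧ (0 : Fin d → ℤ) ∉ X

/-- A legal move: either nothing changes on `Λ`, or the state of one site `z ∈ Λ` is
flipped and some update rule translated at `z` is entirely at state `0`
(sites outside `Λ` counting as zeroes). -/
def legalMove {d : ℕ} (U : Finset (Finset (Fin d → ℤ))) (Λ : Set (Fin d → ℤ))
    (η η' : (Fin d → ℤ) → Bool) : Prop :=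
  (∀ s ∈ Λ, η' s = η s) ∨
  ∃ z ∈ Λ, η' z = !(η z) ∧ (∀ s ∈ Λ, s ≠ z → η' s = η s) ∧
    ∃ X ∈ U, ∀ x ∈ X, extCfg Λ η (z + x) = false

/-- An `n`-legal path from `η` to `η'`: a finite sequence of legal moves along which
every configuration has at most `n` zeroes in `Λ`. -/
def nLegalPath {d : ℕ} (U : Finset (Finset (Fin d → ℤ))) (Λ : Set (Fin d → ℤ)) (n : ℕ)
    (η η' : (Fin d → ℤ) → Bool) : Prop :=
  ∃ (m : ℕ) (p : ℕ → (Fin d → ℤ) → Bool),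
    (∀ s ∈ Λ, p 0 s = η s) ∧ (∀ s ∈ Λ, p m s = η' s) ∧
    (∀ j < m, legalMove U Λ (p j) (p (j + 1))) ∧
    (∀ j ≤ m, {s ∈ Λ | p j s = false}.encard ≤ (n : ℕ∞))

/-- `V n Λ`: the configurations reachable from all-ones by an `n`-legal path. -/
def V {d : ℕ} (U : Finset (Finset (Fin d → ℤ))) (n : ℕ) (Λ : Set (Fin d → ℤ)) :
    Set ((Fin d → ℤ) → Bool) :=
  {η | nLegalPath U Λ n (fun _ => true) η}

/-- Euclidean dot product on `ℝ^d`. -/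
def dotp {d : ℕ} (u v : Fin d → ℝ) : ℝ := ∑ i, u i * v i

/-- `u` is a stable direction for `U`: `u` is a unit vector and no update rule is
contained in the open half-space `{x : ⟨x,u⟩ < 0}`. -/
def stableDir {d : ℕ} (U : Finset (Finset (Fin d → ℤ))) (u : Fin d → ℝ) : Prop :=
  (∑ i, (u i) ^ 2 = 1) ∧ ∀ X ∈ U, ¬ ∀ x ∈ X, dotp (fun i => (x i : ℝ)) u < 0

/-- `U` is supercritical unrooted: some hyperplane of `ℝ^d` (through the origin)
contains all stable directions of `U`. -/
def supUnrooted {d : ℕ} (U : Finset (Finset (Fin d → ℤ))) : Prop :=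
  ∃ w : Fin d → ℝ, w ≠ 0 ∧ ∀ u : Fin d → ℝ, stableDir U u → dotp u w = 0

/-!
Choose finitely many stable directions whose scalar products separate the points of `ℝ^d`, and
view the zeroes as points in these coordinates. Stability means that, in each coordinate, every
rule contains a site at least as high as the updated one, so the updated site lies below the join
of the sites that allow the update.

Reduce a configuration of zeroes by repeatedly replacing two close points by their join and by
deleting points close to the complement of `Λ`, at a scale that doubles each time a point
disappears. This system is confluent, so whether a configuration reduces to nothing does not
depend on the order of the reductions. A legal move adds or removes a point that is either close
to the complement of `Λ` or below the join of a cluster close to it, which does not affect this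
property. Hence every configuration reachable from the empty one reduces to nothing; its points can
then have travelled at most a sum of `n` doubling scales to reach the complement of `Λ`, which is
of order `2 ^ n`.
-/

section Merging

open Relation

variable {α : Type*} [SemilatticeSup α] {near : ℕ → α → α → Prop}

/-- A family of closeness relations on a semilattice, coarser at lower levels, for which two points
close to a common third one stay close, one level lower, after one of them is joined to the third.
This is all that confluence of merging requires. -/
structure IsGradedNearness (near : ℕ → α → α → Prop) : Prop where
  symm {k : ℕ} {a b : α} : near k a b → near k b a
  antitone : Antitone near
  sup {k : ℕ} {a b c : α} : near (k + 1) a b → near (k + 1) a c → near k (a ⊔ b) c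

/-- Replacing two points of a configuration by their join, allowed when they are close at the level
given by the number of the other points: the fewer points are left, the farther merging reaches. -/
inductive MergeStep (near : ℕ → α → α → Prop) : Multiset α → Multiset α → Prop
  | merge {a b : α} {S : Multiset α} (h : near S.card a b) :
      MergeStep near (a ::ₘ b ::ₘ S) ((a ⊔ b) ::ₘ S)

/-- Reachability by finitely many merges. -/
abbrev MergesTo (near : ℕ → α → α → Prop) : Multiset α → Multiset α → Prop :=
  ReflTransGen (MergeStep near)

theorem MergeStep.of_le {a b : α} {S : Multiset α} (hab : a ≤ b) (h : near S.card a b) :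
    MergeStep near (a ::ₘ b ::ₘ S) (b ::ₘ S) := by
  simpa only [sup_of_le_right hab] using MergeStep.merge h

theorem MergeStep.not_singleton {a : α} {Q : Multiset α} : ¬ MergeStep near {a} Q := by
  intro h
  generalize hP : ({a} : Multiset α) = P at h
  cases h
  simpa using congrArg Multiset.card hP

theorem MergesTo.eq_singleton {a : α} {Q : Multiset α} (h : MergesTo near {a} Q) : Q = {a} :=
  h.cases_head.elim Eq.symm fun ⟨_, hstep, _⟩ => (MergeStep.not_singleton hstep).elim

namespace IsGradedNearness

theorem join_of_common (hnear : IsGradedNearness near) {a p q : α} {S T : Multiset α}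
    (hp : near S.card a p) (hq : near T.card a q) (hST : p ::ₘ S = q ::ₘ T) :
    Join (ReflGen (MergeStep near)) ((a ⊔ p) ::ₘ S) ((a ⊔ q) ::ₘ T) := by
  rcases Multiset.cons_eq_cons.1 hST with ⟨rfl, rfl⟩ | ⟨-, rest, rfl, rfl⟩
  · exact ⟨_, .refl, .refl⟩
  · rw [Multiset.card_cons] at hp hq
    refine ⟨(a ⊔ p ⊔ q) ::ₘ rest, .single (.merge (hnear.sup hp hq)), ?_⟩
    rw [sup_right_comm]
    exact .single (.merge (hnear.sup hq hp))

theorem join_of_disjoint (hnear : IsGradedNearness near) {a b p q : α} {S : Multiset α}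
    (hab : near (S.card + 2) a b) (hpq : near (S.card + 2) p q) :
    Join (ReflGen (MergeStep near)) ((a ⊔ b) ::ₘ p ::ₘ q ::ₘ S) ((p ⊔ q) ::ₘ a ::ₘ b ::ₘ S) := by
  have rotate (x y z : α) : x ::ₘ y ::ₘ z ::ₘ S = y ::ₘ z ::ₘ x ::ₘ S := by
    rw [Multiset.cons_swap, Multiset.cons_swap x z]
  have level_le (x : α) : (x ::ₘ S).card ≤ S.card + 2 := by simp
  refine ⟨(a ⊔ b) ::ₘ (p ⊔ q) ::ₘ S, ?_, ?_⟩
  · rw [rotate, Multiset.cons_swap (a ⊔ b)]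
    exact .single (.merge (hnear.antitone (level_le _) _ _ hpq))
  · rw [rotate]
    exact .single (.merge (hnear.antitone (level_le _) _ _ hab))

theorem diamond (hnear : IsGradedNearness near) {P Q Q' : Multiset α}
    (hQ : MergeStep near P Q) (hQ' : MergeStep near P Q') :
    Join (ReflGen (MergeStep near)) Q Q' := by
  obtain @⟨a, b, S, hab⟩ := hQ
  generalize hP : a ::ₘ b ::ₘ S = P at hQ'
  obtain @⟨p, q, T, hpq⟩ := hQ'
  rcases Multiset.cons_eq_cons.1 hP with ⟨rfl, hbq⟩ | ⟨-, R, hR, hqT⟩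
  · exact hnear.join_of_common hab hpq hbq
  rcases Multiset.cons_eq_cons.1 hqT with ⟨rfl, rfl⟩ | ⟨-, R', rfl, rfl⟩
  · rw [sup_comm p q]
    exact hnear.join_of_common hab (hnear.symm hpq) hR
  rcases Multiset.cons_eq_cons.1 hR with ⟨rfl, rfl⟩ | ⟨-, R'', rfl, hqR⟩
  · rw [sup_comm a b]
    exact hnear.join_of_common (hnear.symm hab) hpq (Multiset.cons_swap ..)
  rcases Multiset.cons_eq_cons.1 hqR with ⟨rfl, rfl⟩ | ⟨-, rest, rfl, rfl⟩
  · rw [sup_comm a q, sup_comm p q]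
    exact hnear.join_of_common (hnear.symm hab) (hnear.symm hpq) (Multiset.cons_swap ..)
  · simp only [Multiset.card_cons] at hab hpq
    exact hnear.join_of_disjoint hab hpq

theorem mergesTo_singleton_iff (hnear : IsGradedNearness near) {P Q : Multiset α}
    (hPQ : MergesTo near P Q) (t : α) : MergesTo near P {t} ↔ MergesTo near Q {t} := by
  refine ⟨fun hPt => ?_, hPQ.trans⟩
  have hdiamond (P Q Q' : Multiset α) (hQ : MergeStep near P Q) (hQ' : MergeStep near P Q') :
      ∃ R, ReflGen (MergeStep near) Q R ∧ MergesTo near Q' R :=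
    (hnear.diamond hQ hQ').imp fun _ h => ⟨h.1, h.2.to_reflTransGen⟩
  obtain ⟨R, hQR, htR⟩ := church_rosser hdiamond hPQ hPt
  rwa [MergesTo.eq_singleton htR] at hQR

theorem exists_upperBound_mergesTo (hnear : IsGradedNearness near) {C : Set α} {n : ℕ}
    (hC : SupClosed C) (hCn : ∀ x ∈ C, ∀ y ∈ C, near n x y) {W : Multiset α} (hW : W ≠ 0)
    (hWC : ∀ w ∈ W, w ∈ C) :
    ∃ c ∈ C, (∀ w ∈ W, w ≤ c) ∧
      ∀ S : Multiset α, (W + S).card ≤ n + 2 → MergesTo near (W + S) (c ::ₘ S) := by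
  induction W using Multiset.induction with
  | empty => exact absurd rfl hW
  | cons a W ih =>
    have haC : a ∈ C := hWC a (Multiset.mem_cons_self a W)
    rcases eq_or_ne W 0 with rfl | hW0
    · exact ⟨a, haC, by simp, fun S _ => by simpa using ReflTransGen.refl⟩
    obtain ⟨c, hcC, hWc, hmerge⟩ := ih hW0 fun w hw => hWC w (Multiset.mem_cons_of_mem hw)
    refine ⟨c ⊔ a, hC hcC haC, ?_, fun S hS => ?_⟩
    · simp only [Multiset.mem_cons, forall_eq_or_imp]
      exact ⟨le_sup_right, fun w hw => (hWc w hw).trans le_sup_left⟩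
    · have hWcard : 0 < W.card := Multiset.card_pos.2 hW0
      simp only [Multiset.card_add, Multiset.card_cons] at hS
      rw [Multiset.cons_add, ← Multiset.add_cons]
      exact (hmerge (a ::ₘ S) (by simp only [Multiset.card_add, Multiset.card_cons]; lia)).tail
        (.merge (hnear.antitone (by lia) _ _ (hCn c hcC a haC)))

theorem mergesTo_singleton_cons_iff (hnear : IsGradedNearness near) {C : Set α} {n : ℕ}
    (hC : SupClosed C) (hCn : ∀ x ∈ C, ∀ y ∈ C, near n x y) {W S : Multiset α} (hW : W ≠ 0)
    (hWC : ∀ w ∈ W, w ∈ C) {z : α} (hzC : z ∈ C) (hzW : ∀ c, (∀ w ∈ W, w ≤ c) → z ≤ c)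
    (hcard : (W + S).card ≤ n + 1) (t : α) :
    MergesTo near (z ::ₘ (W + S)) {t} ↔ MergesTo near (W + S) {t} := by
  obtain ⟨c, hcC, hWc, hmerge⟩ := hnear.exists_upperBound_mergesTo hC hCn hW hWC
  have hWpos : 0 < W.card := Multiset.card_pos.2 hW
  rw [Multiset.card_add] at hcard
  have merge_with_z : MergesTo near (z ::ₘ (W + S)) (c ::ₘ S) := by
    have hstep : MergeStep near (z ::ₘ c ::ₘ S) (c ::ₘ S) :=
      .of_le (hzW c hWc) (hnear.antitone (by lia) _ _ (hCn z hzC c hcC))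
    rw [← Multiset.add_cons]
    refine (hmerge (z ::ₘ S) ?_).tail (Multiset.cons_swap z c S ▸ hstep)
    simp only [Multiset.card_add, Multiset.card_cons]
    lia
  have merge_without_z : MergesTo near (W + S) (c ::ₘ S) :=
    hmerge S (by rw [Multiset.card_add]; lia)
  rw [hnear.mergesTo_singleton_iff merge_with_z, hnear.mergesTo_singleton_iff merge_without_z]

end IsGradedNearness

end Merging

section Boundary

open Metric Relation

variable {E : Type*} [PseudoMetricSpace E] {B : Set E} {t t' : ℝ}

/-- Closeness at scale `t` among the points of `E` and an extra point `⊤` standing for the whole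
boundary `B`, so that merging a point with `⊤` is its absorption by the boundary. -/
def BoundaryNear (B : Set E) (t : ℝ) : WithTop E → WithTop E → Prop
  | (p : E), (q : E) => dist p q ≤ t
  | (p : E), ⊤ | ⊤, (p : E) => ∃ b ∈ B, dist p b ≤ t
  | ⊤, ⊤ => True

namespace BoundaryNear

theorem symm {x y : WithTop E} (h : BoundaryNear B t x y) : BoundaryNear B t y x := by
  cases x <;> cases y
  case coe.coe p q => exact (dist_comm q p).trans_le h
  all_goals exact h

theorem mono {x y : WithTop E} (h : BoundaryNear B t x y) (ht : t ≤ t') :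
    BoundaryNear B t' x y := by
  cases x <;> cases y
  case top.top => trivial
  case coe.coe p q => exact h.trans ht
  all_goals exact h.imp fun b hb => ⟨hb.1, hb.2.trans ht⟩

theorem of_mem_coe_closedBall {p : E} {x y : WithTop E} (hx : x ∈ (↑) '' closedBall p t)
    (hy : y ∈ (↑) '' closedBall p t) : BoundaryNear B (2 * t) x y := by
  obtain ⟨x, hx, rfl⟩ := hx
  obtain ⟨y, hy, rfl⟩ := hy
  exact (dist_triangle_right x y p).trans ((add_le_add hx hy).trans_eq (two_mul t).symm)

variable [SemilatticeSup E]

theorem sup (hball : ∀ (x : E) (t : ℝ), SupClosed (closedBall x t)) {x y z : WithTop E}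
    (hxy : BoundaryNear B t x y) (hxz : BoundaryNear B t x z) :
    BoundaryNear B (2 * t) (x ⊔ y) z := by
  rw [two_mul]
  cases x with
  | top =>
    rw [top_sup_eq]
    cases z with
    | top => trivial
    | coe q =>
      obtain ⟨b, hb, hqb⟩ := hxz
      exact ⟨b, hb, hqb.trans (le_add_of_nonneg_left (dist_nonneg.trans hqb))⟩
  | coe p =>
    have near_sup (q c : E) (hpq : dist p q ≤ t) (hpc : dist p c ≤ t) :
        dist (p ⊔ q) c ≤ t + t :=
      hball c (t + t) (hpc.trans (le_add_of_nonneg_left (dist_nonneg.trans hpq)))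
        (dist_triangle_left q c p |>.trans (add_le_add hpq hpc))
    cases y <;> cases z
    case top.top => trivial
    case top.coe q =>
      obtain ⟨b, hb, hpb⟩ := hxy
      exact ⟨b, hb, (dist_triangle_left q b p).trans (add_le_add hxz hpb)⟩
    case coe.top q =>
      obtain ⟨b, hb, hpb⟩ := hxz
      exact ⟨b, hb, near_sup q b hxy hpb⟩
    case coe.coe q c => exact near_sup q c hxy hxz

theorem supClosed_coe_closedBall (hball : ∀ (x : E) (t : ℝ), SupClosed (closedBall x t)) (p : E)
    (t : ℝ) : SupClosed ((↑) '' closedBall p t : Set (WithTop E)) := by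
  rintro _ ⟨x, hx, rfl⟩ _ ⟨y, hy, rfl⟩
  exact ⟨x ⊔ y, hball p t hx hy, rfl⟩

theorem isGradedNearness (hball : ∀ (x : E) (t : ℝ), SupClosed (closedBall x t)) {r : ℕ → ℝ}
    (hr : Antitone r) (hr2 : ∀ k, 2 * r (k + 1) ≤ r k) :
    IsGradedNearness fun k => BoundaryNear B (r k) where
  symm := symm
  antitone _ _ hkl _ _ h := h.mono (hr hkl)
  sup hab hac := (hab.sup hball hac).mono (hr2 _)

theorem exists_dist_le_add (hball : ∀ (x : E) (t : ℝ), SupClosed (closedBall x t)) {p : E}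
    {x : WithTop E} (hpx : BoundaryNear B t p x) (ht' : 0 ≤ t')
    (hsup : ∀ q : E, (p : WithTop E) ⊔ x = q → ∃ b ∈ B, dist q b ≤ t') :
    ∃ b ∈ B, dist p b ≤ t' + t := by
  cases x with
  | top =>
    obtain ⟨b, hb, hpb⟩ := hpx
    exact ⟨b, hb, hpb.trans (le_add_of_nonneg_left ht')⟩
  | coe q =>
    obtain ⟨b, hb, hqb⟩ := hsup (p ⊔ q) rfl
    have hpq : dist (p ⊔ q) p ≤ t :=
      hball p t (mem_closedBall_self (dist_nonneg.trans hpx)) (mem_closedBall'.2 hpx)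
    refine ⟨b, hb, (dist_triangle_left p b (p ⊔ q)).trans ?_⟩
    rw [add_comm]
    exact add_le_add hqb hpq

theorem exists_dist_le_sum (hball : ∀ (x : E) (t : ℝ), SupClosed (closedBall x t)) {r : ℕ → ℝ}
    (hr : 0 ≤ r) {P : Multiset (WithTop E)}
    (hP : MergesTo (fun k => BoundaryNear B (r k)) P {⊤}) {p : E} (hp : (p : WithTop E) ∈ P) :
    ∃ b ∈ B, dist p b ≤ ∑ j ∈ Finset.range (P.card - 1), r j := by
  induction hP using ReflTransGen.head_induction_on generalizing p with
  | refl => simp at hp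
  | head hstep _ ih =>
    obtain @⟨x, y, S, hxy⟩ := hstep
    have hsum : 0 ≤ ∑ j ∈ Finset.range S.card, r j := Finset.sum_nonneg fun j _ => hr j
    simp only [Multiset.card_cons, Nat.add_sub_cancel, Finset.sum_range_succ, Multiset.mem_cons]
      at ih hp ⊢
    rcases hp with rfl | rfl | hpS
    · exact hxy.exists_dist_le_add hball hsum fun q hq => ih (.inl hq.symm)
    · exact hxy.symm.exists_dist_le_add hball hsum fun q hq =>
        ih (.inl (by rw [sup_comm, hq]))
    · obtain ⟨b, hb, hpb⟩ := ih (.inr hpS)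
      exact ⟨b, hb, hpb.trans (le_add_of_nonneg_right (hr _))⟩

end BoundaryNear

theorem supClosed_closedBall_pi {ι : Type*} [Fintype ι] (x : ι → ℝ) (t : ℝ) :
    SupClosed (closedBall x t) := by
  intro p hp q hq
  have ht : 0 ≤ t := dist_nonneg.trans hp
  simp only [mem_closedBall, dist_pi_le_iff ht, Pi.sup_apply] at hp hq ⊢
  intro i
  rcases max_choice (p i) (q i) with h | h
  · exact (congrArg (dist · (x i)) h).trans_le (hp i)
  · exact (congrArg (dist · (x i)) h).trans_le (hq i)

end Boundary

section Dynamics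

variable {d : ℕ} {U : Finset (Finset (Fin d → ℤ))} {Λ : Set (Fin d → ℤ)}

/-- The sites of `Λ` in state `0`. -/
def zeroSet (Λ : Set (Fin d → ℤ)) (η : (Fin d → ℤ) → Bool) : Set (Fin d → ℤ) :=
  {s ∈ Λ | η s = false}

/-- The constraint at the site `z` is satisfied as soon as the sites of `G` are in state `0`. -/
def CanFlip (U : Finset (Finset (Fin d → ℤ))) (Λ G : Set (Fin d → ℤ)) (z : Fin d → ℤ) : Prop :=
  ∃ X ∈ U, ∀ x ∈ X, z + x ∈ Λ → z + x ∈ G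

theorem zeroSet_congr {η η' : (Fin d → ℤ) → Bool} (h : ∀ s ∈ Λ, η s = η' s) :
    zeroSet Λ η = zeroSet Λ η' :=
  Set.ext fun s => and_congr_right fun hs => by rw [h s hs]

theorem zeroSet_of_legalMove (hU : isUpdateFamily U) {η η' : (Fin d → ℤ) → Bool}
    (hmove : legalMove U Λ η η') :
    zeroSet Λ η' = zeroSet Λ η ∨ ∃ z G, z ∉ G ∧ CanFlip U Λ G z ∧
      (zeroSet Λ η = G ∧ zeroSet Λ η' = insert z G ∨
        zeroSet Λ η = insert z G ∧ zeroSet Λ η' = G) := by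
  rcases hmove with hsame | ⟨z, hz, hflip, hother, X, hX, hzero⟩
  · exact .inl (zeroSet_congr hsame)
  have hdiff : zeroSet Λ η' \ {z} = zeroSet Λ η \ {z} := by
    ext s
    simp only [zeroSet, Set.mem_sdiff, Set.mem_ofPred_eq, Set.mem_singleton_iff]
    exact and_congr_left fun hsz => and_congr_right fun hs => by rw [hother s hs hsz]
  refine .inr ⟨z, zeroSet Λ η \ {z}, by simp, ⟨X, hX, fun x hx hxΛ => ⟨⟨hxΛ, ?_⟩, ?_⟩⟩, ?_⟩
  · simpa [extCfg, hxΛ] using hzero x hx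
  · intro hzx
    exact (hU X hX).2 (by rwa [← add_eq_left.1 hzx])
  cases hηz : η z with
  | true =>
    have hz_notMem : z ∉ zeroSet Λ η := by simp [zeroSet, hηz]
    have hz_mem : z ∈ zeroSet Λ η' := ⟨hz, by rw [hflip, hηz]; rfl⟩
    refine .inl ⟨(Set.sdiff_singleton_eq_self hz_notMem).symm, ?_⟩
    rw [← hdiff, Set.insert_sdiff_self_of_mem hz_mem]
  | false =>
    have hz_mem : z ∈ zeroSet Λ η := ⟨hz, hηz⟩
    have hz_notMem : z ∉ zeroSet Λ η' := by simp [zeroSet, hflip, hηz]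
    refine .inr ⟨(Set.insert_sdiff_self_of_mem hz_mem).symm, ?_⟩
    rw [← hdiff, Set.sdiff_singleton_eq_self hz_notMem]

variable {ι : Type*} {φ : (Fin d → ℤ) →+ (ι → ℝ)} {R : ℝ} {n : ℕ}

/-- The merging scales. Each one is half of the previous one, and the levels below `n`, which are
those of configurations of at most `n` zeroes, have scale at least the diameter `2 * R` of a
rule. -/
noncomputable def mergeScale (R : ℝ) (n k : ℕ) : ℝ := R * 2 ^ n / 2 ^ k

theorem mergeScale_nonneg (hR : 0 ≤ R) (n : ℕ) : 0 ≤ mergeScale R n := fun k => by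
  simp only [mergeScale]
  positivity

theorem mergeScale_antitone (hR : 0 ≤ R) (n : ℕ) : Antitone (mergeScale R n) := fun k l hkl => by
  unfold mergeScale
  gcongr
  norm_num

theorem two_mul_mergeScale_succ (R : ℝ) (n k : ℕ) :
    2 * mergeScale R n (k + 1) = mergeScale R n k := by
  unfold mergeScale
  field_simp
  ring

theorem two_mul_le_mergeScale (hR : 0 ≤ R) {k : ℕ} (hk : k < n) : 2 * R ≤ mergeScale R n k := by
  calc 2 * R = mergeScale R (k + 1) k := by unfold mergeScale; field_simp; ring
    _ ≤ mergeScale R n k := by unfold mergeScale; gcongr <;> norm_num; lia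

theorem sum_mergeScale (R : ℝ) (n m : ℕ) :
    ∑ j ∈ Finset.range m, mergeScale R n j = 2 * (R * 2 ^ n - mergeScale R n m) := by
  induction m with
  | zero => simp [mergeScale]
  | succ m ih => rw [Finset.sum_range_succ, ih, ← two_mul_mergeScale_succ R n m]; ring

theorem sum_mergeScale_le (hR : 0 ≤ R) {m : ℕ} (hm : m ≤ n) :
    ∑ j ∈ Finset.range m, mergeScale R n j ≤ 2 * R * (2 ^ n - 1) := by
  have hself : mergeScale R n n = R := by unfold mergeScale; field_simp
  have := mergeScale_antitone hR n hm
  rw [sum_mergeScale]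
  linarith

/-- The points of the reduction system: the coordinates of the sites of `F`, together with `⊤` for
the complement of the domain. -/
def boundaryConfig (φ : (Fin d → ℤ) →+ (ι → ℝ)) (F : Finset (Fin d → ℤ)) :
    Multiset (WithTop (ι → ℝ)) :=
  ⊤ ::ₘ F.val.map fun s => (φ s : WithTop (ι → ℝ))

theorem boundaryConfig_cons {F : Finset (Fin d → ℤ)} {z : Fin d → ℤ} (hz : z ∉ F) :
    boundaryConfig φ (F.cons z hz) = (φ z : WithTop (ι → ℝ)) ::ₘ boundaryConfig φ F := by
  rw [boundaryConfig, Finset.cons_val, Multiset.map_cons, Multiset.cons_swap, boundaryConfig]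

theorem card_boundaryConfig (φ : (Fin d → ℤ) →+ (ι → ℝ)) (F : Finset (Fin d → ℤ)) :
    (boundaryConfig φ F).card = F.card + 1 := by
  simp [boundaryConfig]

variable [Fintype ι]

/-- Coordinates on `ℤ^d` along directions that are stable for `U`, in which all the rules of `U`
have radius at most `R`. -/
structure IsStableCoords (U : Finset (Finset (Fin d → ℤ))) (φ : (Fin d → ℤ) →+ (ι → ℝ)) (R : ℝ) :
    Prop where
  pos : 0 < R
  exists_nonneg : ∀ X ∈ U, ∀ i, ∃ x ∈ X, 0 ≤ φ x i
  norm_le : ∀ X ∈ U, ∀ x ∈ X, ‖φ x‖ ≤ R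

/-- The zeroes in `F` are all eventually absorbed by the complement of `Λ`. -/
def CollapsesToBoundary (φ : (Fin d → ℤ) →+ (ι → ℝ)) (R : ℝ) (n : ℕ) (Λ : Set (Fin d → ℤ))
    (F : Finset (Fin d → ℤ)) : Prop :=
  MergesTo (fun k => BoundaryNear (φ '' Λᶜ) (mergeScale R n k)) (boundaryConfig φ F) {⊤}

/-- The invariant of the dynamics with at most `n` zeroes. -/
def ZeroesCollapse (φ : (Fin d → ℤ) →+ (ι → ℝ)) (R : ℝ) (n : ℕ) (Λ : Set (Fin d → ℤ))
    (η : (Fin d → ℤ) → Bool) : Prop :=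
  ∃ F : Finset (Fin d → ℤ), ↑F = zeroSet Λ η ∧ F.card ≤ n ∧ CollapsesToBoundary φ R n Λ F

namespace IsStableCoords

theorem isGradedNearness (hφ : IsStableCoords U φ R) (n : ℕ) (B : Set (ι → ℝ)) :
    IsGradedNearness fun k => BoundaryNear B (mergeScale R n k) :=
  BoundaryNear.isGradedNearness supClosed_closedBall_pi (mergeScale_antitone hφ.pos.le n)
    fun k => (two_mul_mergeScale_succ R n k).le

theorem dist_add_le (hφ : IsStableCoords U φ R) {X : Finset (Fin d → ℤ)} (hX : X ∈ U)
    {x : Fin d → ℤ} (hx : x ∈ X) (z : Fin d → ℤ) : dist (φ (z + x)) (φ z) ≤ R := by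
  rw [map_add, dist_self_add_left]
  exact hφ.norm_le X hX x hx

theorem le_of_forall_add_le (hφ : IsStableCoords U φ R) {X : Finset (Fin d → ℤ)} (hX : X ∈ U)
    {z : Fin d → ℤ} (c : WithTop (ι → ℝ))
    (hc : ∀ w ∈ X.val.map fun x => (φ (z + x) : WithTop (ι → ℝ)), w ≤ c) : φ z ≤ c := by
  cases c with
  | top => exact le_top
  | coe c =>
    refine WithTop.coe_le_coe.2 fun i => ?_
    obtain ⟨x, hx, hxi⟩ := hφ.exists_nonneg X hX i
    calc φ z i ≤ φ (z + x) i := by simpa using hxi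
      _ ≤ c i := WithTop.coe_le_coe.1 (hc _ (Multiset.mem_map_of_mem _ hx)) i

theorem collapsesToBoundary_cons_iff_of_notMem (hφ : IsStableCoords U φ R)
    {X : Finset (Fin d → ℤ)} (hX : X ∈ U) {x : Fin d → ℤ} (hx : x ∈ X) {F : Finset (Fin d → ℤ)}
    {z : Fin d → ℤ} (hz : z ∉ F) (hzx : z + x ∉ Λ) (hcard : F.card < n) :
    CollapsesToBoundary φ R n Λ (F.cons z hz) ↔ CollapsesToBoundary φ R n Λ F := by
  have hnear : BoundaryNear (φ '' Λᶜ) (mergeScale R n F.card) (φ z) ⊤ := by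
    refine ⟨φ (z + x), ⟨z + x, hzx, rfl⟩, ?_⟩
    rw [dist_comm]
    linarith [hφ.dist_add_le hX hx z, two_mul_le_mergeScale hφ.pos.le hcard, hφ.pos]
  unfold CollapsesToBoundary
  rw [boundaryConfig_cons]
  refine (hφ.isGradedNearness n _).mergesTo_singleton_iff (.single (.of_le le_top ?_)) ⊤
  rwa [Multiset.card_map, Finset.card_val]

theorem collapsesToBoundary_cons_iff_of_subset (hφ : IsStableCoords U φ R)
    {X : Finset (Fin d → ℤ)} (hX : X ∈ U) (hX0 : X.Nonempty) {F : Finset (Fin d → ℤ)}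
    {z : Fin d → ℤ} (hz : z ∉ F) (hXF : X.map (addLeftEmbedding z) ⊆ F) (hcard : F.card < n) :
    CollapsesToBoundary φ R n Λ (F.cons z hz) ↔ CollapsesToBoundary φ R n Λ F := by
  obtain ⟨T, hT⟩ := Multiset.le_iff_exists_add.1 (Finset.val_le_iff.2 hXF)
  let cluster : Multiset (WithTop (ι → ℝ)) := X.val.map fun x => ↑(φ (z + x))
  let others : Multiset (WithTop (ι → ℝ)) := ⊤ ::ₘ T.map fun s => ↑(φ s)
  have hF : boundaryConfig φ F = cluster + others := by
    simp only [boundaryConfig, hT, cluster, others, Multiset.map_add, Finset.map_val,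
      Multiset.map_map, Multiset.add_cons, Function.comp_def, addLeftEmbedding_apply]
  have hcluster : ∀ w ∈ cluster, w ∈ (↑) '' Metric.closedBall (φ z) R := fun w hw => by
    obtain ⟨x, hx, rfl⟩ := Multiset.mem_map.1 hw
    exact ⟨_, hφ.dist_add_le hX hx z, rfl⟩
  unfold CollapsesToBoundary
  rw [boundaryConfig_cons, hF]
  refine (hφ.isGradedNearness n _).mergesTo_singleton_cons_iff (n := F.card)
    (BoundaryNear.supClosed_coe_closedBall supClosed_closedBall_pi (φ z) R)
    (fun p hp q hq => (BoundaryNear.of_mem_coe_closedBall hp hq).mono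
      (two_mul_le_mergeScale hφ.pos.le hcard)) ?_ hcluster
    ⟨φ z, Metric.mem_closedBall_self hφ.pos.le, rfl⟩ (hφ.le_of_forall_add_le hX) ?_ ⊤
  · simpa [cluster] using hX0.ne_empty
  · rw [← hF, card_boundaryConfig]

theorem collapsesToBoundary_cons_iff (hφ : IsStableCoords U φ R) (hU : isUpdateFamily U)
    {F : Finset (Fin d → ℤ)} {z : Fin d → ℤ} (hz : z ∉ F) (hflip : CanFlip U Λ F z)
    (hcard : F.card < n) :
    CollapsesToBoundary φ R n Λ (F.cons z hz) ↔ CollapsesToBoundary φ R n Λ F := by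
  obtain ⟨X, hX, hXF⟩ := hflip
  by_cases hXΛ : ∃ x ∈ X, z + x ∉ Λ
  · obtain ⟨x, hx, hzx⟩ := hXΛ
    exact hφ.collapsesToBoundary_cons_iff_of_notMem hX hx hz hzx hcard
  · push Not at hXΛ
    refine hφ.collapsesToBoundary_cons_iff_of_subset hX (hU X hX).1 hz ?_ hcard
    intro s hs
    obtain ⟨x, hx, rfl⟩ := Finset.mem_map.1 hs
    exact hXF x hx (hXΛ x hx)

theorem zeroesCollapse_of_legalMove (hφ : IsStableCoords U φ R) (hU : isUpdateFamily U)
    {η η' : (Fin d → ℤ) → Bool} (hmove : legalMove U Λ η η') (hη' : (zeroSet Λ η').encard ≤ n)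
    (hη : ZeroesCollapse φ R n Λ η) : ZeroesCollapse φ R n Λ η' := by
  obtain ⟨F, hFη, hFn, hF⟩ := hη
  rcases zeroSet_of_legalMove hU hmove with hsame | ⟨z, G, hz, hflip, ⟨hη, hins⟩ | ⟨hins, hη⟩⟩
  · exact ⟨F, hFη.trans hsame.symm, hFn, hF⟩
  · obtain rfl : ↑F = G := hFη.trans hη
    have hcons : ↑(F.cons z hz) = zeroSet Λ η' := by rw [Finset.coe_cons, hins]
    have hcard : (F.cons z hz).card ≤ n := by
      rw [← hcons, Set.encard_coe_eq_coe_finsetCard] at hη'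
      exact_mod_cast hη'
    refine ⟨F.cons z hz, hcons, hcard, ?_⟩
    exact (hφ.collapsesToBoundary_cons_iff hU hz hflip (by rwa [Finset.card_cons] at hcard)).2 hF
  · have hFz : ↑F = insert z G := hFη.trans hins
    lift G to Finset (Fin d → ℤ) using F.finite_toSet.subset (hFz ▸ Set.subset_insert z G)
    obtain rfl : F = G.cons z hz := by
      rw [← Finset.coe_inj, hFz, Finset.coe_cons]
    rw [Finset.card_cons] at hFn
    refine ⟨G, hη.symm, by lia, ?_⟩
    exact (hφ.collapsesToBoundary_cons_iff hU hz hflip hFn).1 hF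

theorem zeroesCollapse_of_mem_V (hφ : IsStableCoords U φ R) (hU : isUpdateFamily U)
    {η : (Fin d → ℤ) → Bool} (hη : η ∈ V U n Λ) : ZeroesCollapse φ R n Λ η := by
  obtain ⟨m, path, hstart, hend, hmoves, hcard⟩ := hη
  suffices hpath : ∀ j ≤ m, ZeroesCollapse φ R n Λ (path j) by
    simpa only [ZeroesCollapse, zeroSet_congr hend] using hpath m le_rfl
  intro j hj
  induction j with
  | zero =>
    refine ⟨∅, ?_, by simp, .refl⟩
    rw [zeroSet_congr hstart]
    simp [zeroSet]
  | succ j ih =>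
    exact hφ.zeroesCollapse_of_legalMove hU (hmoves j hj) (hcard _ hj) (ih (Nat.le_of_succ_le hj))

theorem exists_notMem_dist_le (hφ : IsStableCoords U φ R) (hU : isUpdateFamily U)
    {η : (Fin d → ℤ) → Bool} (hη : η ∈ V U n Λ) {s : Fin d → ℤ} (hs : s ∈ Λ)
    (hηs : η s = false) : ∃ t ∉ Λ, dist (φ s) (φ t) ≤ 2 * R * (2 ^ n - 1) := by
  obtain ⟨F, hFη, hFn, hF⟩ := hφ.zeroesCollapse_of_mem_V hU hη
  have hsF : s ∈ F := by
    rw [← Finset.mem_coe, hFη]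
    exact ⟨hs, hηs⟩
  obtain ⟨_, ⟨t, ht, rfl⟩, hst⟩ := BoundaryNear.exists_dist_le_sum supClosed_closedBall_pi
    (mergeScale_nonneg hφ.pos.le n) hF
    (Multiset.mem_cons_of_mem (Multiset.mem_map_of_mem _ hsF))
  refine ⟨t, ht, hst.trans (sum_mergeScale_le hφ.pos.le ?_)⟩
  rwa [card_boundaryConfig, Nat.add_sub_cancel]

end IsStableCoords

end Dynamics

section StableDirections

variable {d : ℕ} {U : Finset (Finset (Fin d → ℤ))}

theorem exists_finset_stableDir (h : ¬ supUnrooted U) :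
    ∃ D : Finset (Fin d → ℝ), (∀ u ∈ D, stableDir U u) ∧
      ∀ w : Fin d → ℝ, (∀ u ∈ D, u ⬝ᵥ w = 0) → w = 0 := by
  obtain ⟨D, hD, hspan⟩ :=
    (Submodule.fg_span_iff_fg_span_finset_subset (R := ℝ) {u | stableDir U u}).1
      (IsNoetherian.noetherian _)
  refine ⟨D, hD, fun w hw => by_contra fun hw0 => h ⟨w, hw0, fun u hu => ?_⟩⟩
  have hu_span : u ∈ Submodule.span ℝ (D : Set (Fin d → ℝ)) :=
    hspan ▸ Submodule.subset_span hu
  have hspan_le : Submodule.span ℝ (D : Set (Fin d → ℝ)) ≤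
      LinearMap.ker ((dotProductBilin ℝ ℝ).flip w) :=
    Submodule.span_le.2 hw
  exact hspan_le hu_span

/-- The scalar products of a point of `ℤ^d` with the vectors of `D`. -/
noncomputable def scalarCoords (D : Finset (Fin d → ℝ)) : (Fin d → ℤ) →+ (D → ℝ) :=
  (Matrix.of fun u : D => u.1).mulVecLin.toAddMonoidHom.comp
    ((Int.castAddHom ℝ).compLeft (Fin d))

theorem exists_dist_le_mul_dist_scalarCoords {D : Finset (Fin d → ℝ)}
    (hD : ∀ w : Fin d → ℝ, (∀ u ∈ D, u ⬝ᵥ w = 0) → w = 0) :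
    ∃ K : ℝ, 0 < K ∧ ∀ s t, dist s t ≤ K * dist (scalarCoords D s) (scalarCoords D t) := by
  obtain ⟨K, hK, hanti⟩ := (Matrix.of fun u : D => u.1).mulVecLin.exists_antilipschitzWith <| by
    rw [LinearMap.ker_eq_bot']
    exact fun w hw => hD w fun u hu => congrFun hw ⟨u, hu⟩
  refine ⟨K, NNReal.coe_pos.2 hK, fun s t => ?_⟩
  have hcast : dist s t = dist (fun i => (s i : ℝ)) (fun i => (t i : ℝ)) := by
    simp [dist_pi_def, nndist_dist]
  rw [hcast]
  exact hanti.le_mul_dist _ _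

theorem exists_isStableCoords {D : Finset (Fin d → ℝ)} (hD : ∀ u ∈ D, stableDir U u) :
    ∃ R, IsStableCoords U (scalarCoords D) R := by
  obtain ⟨M, hM⟩ := ((U.biUnion id).image (‖scalarCoords D ·‖)).exists_le
  refine ⟨max M 1, by positivity, fun X hX u => ?_, fun X hX x hx => ?_⟩
  · have hstable := (hD u u.2).2 X hX
    push Not at hstable
    obtain ⟨x, hx, hxu⟩ := hstable
    exact ⟨x, hx, hxu.trans_eq (dotProduct_comm _ _)⟩
  · exact (hM _ (Finset.mem_image_of_mem _ (Finset.mem_biUnion.2 ⟨X, hX, hx⟩))).trans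
      (le_max_left M 1)

end StableDirections

theorem mem_box_of_dist_zero_le {d : ℕ} {t : Fin d → ℤ} {a : ℝ} (h : dist 0 t ≤ a) :
    ∀ i, -⌊a⌋ ≤ t i ∧ t i ≤ ⌊a⌋ := by
  intro i
  have hi : |(t i : ℝ)| ≤ a := by
    simpa [Int.dist_eq] using (dist_le_pi_dist 0 t i).trans h
  rw [neg_le, Int.le_floor, Int.le_floor, Int.cast_neg]
  exact ⟨neg_le.1 (abs_le.1 hi).1, (abs_le.1 hi).2⟩

theorem two_pow_sub_one_le_mul_two_pow (n : ℕ) : (2 ^ n - 1 : ℝ) ≤ n * 2 ^ n := by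
  rcases n.eq_zero_or_pos with rfl | hn
  · simp
  · have : (1 : ℝ) ≤ n := mod_cast hn
    nlinarith [pow_pos (two_pos (α := ℝ)) n]

theorem stmt12_general {d : ℕ} {U : Finset (Finset (Fin d → ℤ))} (hU : isUpdateFamily U)
    (h : ¬ supUnrooted U) :
    ∃ κ : ℝ, 0 < κ ∧ ∀ (n : ℕ) (Λ : Set (Fin d → ℤ)), ∀ η ∈ V U n Λ, ∀ s ∈ Λ, η s = false →
      ∃ t ∉ Λ, dist s t ≤ κ * (2 ^ n - 1) := by
  obtain ⟨D, hstable, hspan⟩ := exists_finset_stableDir h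
  obtain ⟨K, hK, hdist⟩ := exists_dist_le_mul_dist_scalarCoords hspan
  obtain ⟨R, hφ⟩ := exists_isStableCoords hstable
  refine ⟨K * (2 * R), mul_pos hK (mul_pos two_pos hφ.pos), fun n Λ η hη s hs hηs => ?_⟩
  obtain ⟨t, ht, hst⟩ := hφ.exists_notMem_dist_le hU hη hs hηs
  refine ⟨t, ht, (hdist s t).trans ?_⟩
  rw [mul_assoc K]
  exact mul_le_mul_of_nonneg_left hst hK.le

/-- Main theorem: if `U` is not supercritical unrooted, there is a constant `κ > 0` such
that for every `n`, every configuration reachable in the box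
`{-⌊κ n 2^n⌋, ..., ⌊κ n 2^n⌋}^d` from all-ones using at most `n` simultaneous zeroes
has a one at the origin. -/
theorem stmt12 (d : ℕ) (hd : 1 ≤ d) (U : Finset (Finset (Fin d → ℤ)))
    (hU : isUpdateFamily U) (h : ¬ supUnrooted U) :
    ∃ κ : ℝ, 0 < κ ∧ ∀ n : ℕ,
      ∀ η ∈ V U n {s : Fin d → ℤ |
          ∀ i, -⌊κ * n * 2 ^ n⌋ ≤ s i ∧ s i ≤ ⌊κ * n * 2 ^ n⌋},
        η 0 = true := by
  obtain ⟨κ, hκ, hdist⟩ := stmt12_general hU h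
  refine ⟨κ, hκ, fun n η hη => Bool.of_not_eq_false fun hη0 => ?_⟩
  obtain ⟨t, ht, h0t⟩ :=
    hdist n _ η hη 0 (mem_box_of_dist_zero_le (by rw [dist_self]; positivity)) hη0
  refine ht (mem_box_of_dist_zero_le (h0t.trans ?_))
  rw [mul_assoc]
  exact mul_le_mul_of_nonneg_left (two_pow_sub_one_le_mul_two_pow n) hκ.le
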